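/- Let k be an algebraically closed field of characteristic p > 0. Every exponential matrix A(T) of Mat(n, k[T]) can be written as A(T) = Π_{i=1}^r Exp(T^{p^{i-1}}·N_i) for some r ≥ 1 and pairwise commuting matrices N₁, ..., N_r ∈ Mat(n, k) with N_i^p = 0 for all i. -/

import Mathlib

open Polynomial

/-- `A(T) ∈ Mat(n, k[T])` is an exponential matrix: `A(T)·A(T') = A(T+T')` in
`Mat(n, k[T,T'])` and `A(0) = I_n`. -/
def IsExpMat {k : Type*} [Field k] {n : ℕ}
    (A : Matrix (Fin n) (Fin n) (Polynomial k)) : Prop :=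
  A.map (fun q => aeval ((C X + X : Polynomial (Polynomial k))) q) =
    A.map (fun q => aeval ((C X : Polynomial (Polynomial k))) q) *
      A.map (fun q => aeval (X : Polynomial (Polynomial k)) q) ∧
  A.map (fun q => q.eval 0) = 1

/-- `Exp(T^m · N) = ∑_{j=0}^{p-1} T^{m j} N^j / j!`. -/
noncomputable def expT (k : Type*) [Field k] (n p m : ℕ)
    (N : Matrix (Fin n) (Fin n) k) : Matrix (Fin n) (Fin n) (Polynomial k) :=
  ∑ j ∈ Finset.range p, (C ((j.factorial : k)⁻¹) * X ^ (m * j)) • ((N ^ j).map C)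

theorem choose_add_pow_mul_modEq_one {p : ℕ} [Fact p.Prime] (e m j : ℕ) (hm : m < p ^ e) :
    (m + p ^ e * j).choose m ≡ 1 [MOD p] := by
  induction e generalizing m with
  | zero =>
    obtain rfl : m = 0 := by simpa using hm
    simp [Nat.ModEq]
  | succ e ih =>
    have hp : 0 < p := (Fact.out : p.Prime).pos
    have key := Choose.choose_modEq_choose_mod_mul_choose_div_nat (p := p)
      (n := m + p ^ (e + 1) * j) (k := m)
    have h1 : m + p ^ (e + 1) * j = m + p * (p ^ e * j) := by ring
    rw [h1, Nat.add_mul_mod_self_left, Nat.add_mul_div_left _ _ hp, Nat.choose_self, one_mul] at key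
    rw [h1]
    exact key.trans (ih _ (Nat.div_lt_of_lt_mul (by rwa [← pow_succ'])))

theorem Finset.sum_range_mul_eq_sum_sum {M : Type*} [AddCommMonoid M] (f : ℕ → M) (q d : ℕ) :
    ∑ i ∈ Finset.range (q * d), f i =
      ∑ j ∈ Finset.range d, ∑ i ∈ Finset.range q, f (i + q * j) := by
  induction d with
  | zero => simp
  | succ d ih =>
    rw [Nat.mul_succ, Finset.sum_range_add, Finset.sum_range_succ, ih]
    simp only [add_comm]

theorem coeff_coeff_aeval_C_X_add_X {R : Type*} [CommRing R] (q : R[X]) (i j : ℕ) :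
    ((aeval (C X + X : R[X][X]) q).coeff j).coeff i = (i + j).choose i * q.coeff (i + j) := by
  induction q using Polynomial.induction_on' with
  | add f g hf hg => simp [hf, hg, mul_add]
  | monomial m a =>
    rw [aeval_monomial, add_comm (C X : R[X][X]) X, IsScalarTower.algebraMap_apply R R[X] R[X][X],
      algebraMap_eq, algebraMap_eq, coeff_C_mul, coeff_X_add_C_pow, coeff_C_mul, coeff_mul_natCast,
      coeff_X_pow, coeff_monomial]
    by_cases h : m = i + j
    · subst h
      rw [Nat.choose_symm_add (a := i)]
      simp [mul_comm]
    · rw [if_neg h]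
      split_ifs with h'
      · rw [Nat.choose_eq_zero_of_lt (by omega)]
        simp
      · simp

theorem aeval_C_X_eq_C {R : Type*} [CommRing R] (q : R[X]) : aeval (C X : R[X][X]) q = C q := by
  induction q using Polynomial.induction_on' with
  | add f g hf hg => simp [hf, hg]
  | monomial m a =>
    rw [aeval_monomial, IsScalarTower.algebraMap_apply R R[X] R[X][X], algebraMap_eq,
      algebraMap_eq, ← C_pow, ← C_mul, C_mul_X_pow_eq_monomial]

theorem aeval_X_eq_map_C {R : Type*} [CommRing R] (q : R[X]) :
    aeval (X : R[X][X]) q = q.map C := by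
  induction q using Polynomial.induction_on' with
  | add f g hf hg => simp [hf, hg]
  | monomial m a =>
    rw [aeval_monomial, IsScalarTower.algebraMap_apply R R[X] R[X][X], algebraMap_eq,
      algebraMap_eq, C_mul_X_pow_eq_monomial, map_monomial]

section

variable {k : Type*} [Field k] {n : ℕ}

theorem IsExpMat.map_coeff_zero {A : Matrix (Fin n) (Fin n) k[X]} (hA : IsExpMat A) :
    A.map (coeff · 0) = 1 := by
  simpa only [coeff_zero_eq_eval_zero] using hA.2

theorem IsExpMat.map_coeff_mul {A : Matrix (Fin n) (Fin n) k[X]} (hA : IsExpMat A) (i j : ℕ) :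
    A.map (coeff · i) * A.map (coeff · j) =
      ((i + j).choose i : k) • A.map (coeff · (i + j)) := by
  ext s t
  have h := congrArg (fun q => (q.coeff j).coeff i) (congrFun (congrFun hA.1 s) t)
  simp only [Matrix.map_apply, coeff_coeff_aeval_C_X_add_X, Matrix.mul_apply, finsetSum_coeff,
    aeval_C_X_eq_C, aeval_X_eq_map_C, coeff_C_mul, coeff_map, coeff_mul_C] at h
  simp only [Matrix.smul_apply, Matrix.map_apply, smul_eq_mul, h, Matrix.mul_apply]

theorem exists_eq_sum_X_pow_smul (A : Matrix (Fin n) (Fin n) k[X]) :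
    ∃ d₀ : ℕ, ∀ d ≥ d₀,
      A = ∑ i ∈ Finset.range d, (X ^ i : k[X]) • (A.map (coeff · i)).map C := by
  refine ⟨∑ s, ∑ t, ((A s t).natDegree + 1), fun d hd => ?_⟩
  ext1 s t
  have hst : (A s t).natDegree + 1 ≤ d := hd.trans' <|
    (Finset.single_le_sum (f := fun t => (A s t).natDegree + 1) (fun _ _ => Nat.zero_le _)
      (Finset.mem_univ t)).trans
    (Finset.single_le_sum (f := fun s => ∑ t, ((A s t).natDegree + 1))
      (fun _ _ => Nat.zero_le _) (Finset.mem_univ s))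
  rw [Matrix.sum_apply]
  simp only [Matrix.smul_apply, Matrix.map_apply, smul_eq_mul, X_pow_mul]
  exact (A s t).as_sum_range_C_mul_X_pow' hst

variable {a : ℕ → Matrix (Fin n) (Fin n) k} {p : ℕ} [Fact p.Prime] [CharP k p]

theorem pow_eq_factorial_smul_of_mul_eq_choose_smul (h0 : a 0 = 1)
    (hmul : ∀ i j, a i * a j = ((i + j).choose i : k) • a (i + j)) (e j : ℕ) :
    a (p ^ e) ^ j = (j.factorial : k) • a (p ^ e * j) := by
  induction j with
  | zero => simp [h0]
  | succ j ih =>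
    have hc : ((p ^ e * (j + 1)).choose (p ^ e * j) : k) = (j + 1 : ℕ) := by
      rw [CharP.natCast_eq_natCast k p]
      simpa using Choose.choose_pow_mul_pow_mul_modEq_choose_nat (p := p) (k := e) (a := j + 1)
        (b := j)
    rw [pow_succ, ih, smul_mul_assoc, hmul, ← Nat.mul_succ, smul_smul, Nat.succ_eq_add_one, hc,
      Nat.factorial_succ, Nat.cast_mul, mul_comm]

theorem expT_eq_sum_X_pow_smul (h0 : a 0 = 1)
    (hmul : ∀ i j, a i * a j = ((i + j).choose i : k) • a (i + j)) (e : ℕ) :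
    expT k n p (p ^ e) (a (p ^ e)) =
      ∑ j ∈ Finset.range p, (X ^ (p ^ e * j) : k[X]) • (a (p ^ e * j)).map C := by
  refine Finset.sum_congr rfl fun j hj => ?_
  have hf : (j.factorial : k) ≠ 0 := by
    rw [Ne, CharP.cast_eq_zero_iff k p, (Fact.out : p.Prime).dvd_factorial, not_le]
    exact Finset.mem_range.mp hj
  rw [pow_eq_factorial_smul_of_mul_eq_choose_smul h0 hmul]
  ext1 s t
  simp only [Matrix.smul_apply, Matrix.map_apply, smul_eq_mul, C_mul]
  rw [mul_right_comm, ← mul_assoc, ← C_mul, inv_mul_cancel₀ hf, C_1, one_mul, mul_comm]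

theorem prod_expT_eq_sum_X_pow_smul (h0 : a 0 = 1)
    (hmul : ∀ i j, a i * a j = ((i + j).choose i : k) • a (i + j)) (r : ℕ) :
    (List.ofFn fun i : Fin r => expT k n p (p ^ (i : ℕ)) (a (p ^ (i : ℕ)))).prod =
      ∑ i ∈ Finset.range (p ^ r), (X ^ i : k[X]) • (a i).map C := by
  induction r with
  | zero => simp [h0]
  | succ r ih =>
    rw [List.ofFn_succ', List.concat_eq_append, List.prod_append, List.prod_singleton]
    simp only [Fin.val_castSucc, Fin.val_last]
    rw [ih, expT_eq_sum_X_pow_smul h0 hmul, pow_succ, Finset.sum_range_mul_eq_sum_sum,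
      Finset.mul_sum]
    refine Finset.sum_congr rfl fun j _ => ?_
    rw [Finset.sum_mul]
    refine Finset.sum_congr rfl fun i hi => ?_
    have hc : ((i + p ^ r * j).choose i : k) = 1 := by
      rw [← Nat.cast_one, CharP.natCast_eq_natCast k p]
      exact choose_add_pow_mul_modEq_one r i j (Finset.mem_range.mp hi)
    rw [smul_mul_smul_comm, ← pow_add, ← Matrix.map_mul, hmul, hc, one_smul]

end

/-- Over an algebraically closed field of characteristic `p > 0`, every exponential
matrix can be written as `∏_{i=1}^r Exp(T^{p^{i-1}} N_i)` for some `r ≥ 1` and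
pairwise commuting `N_i` with `N_i^p = 0`. -/
theorem stmt_15 {k : Type*} [Field k] [IsAlgClosed k] {p : ℕ} (hp : p.Prime)
    [CharP k p] {n : ℕ}
    (A : Matrix (Fin n) (Fin n) (Polynomial k)) (hA : IsExpMat A) :
    ∃ r : ℕ, 1 ≤ r ∧ ∃ N : Fin r → Matrix (Fin n) (Fin n) k,
      (∀ i, N i ^ p = 0) ∧ (∀ i j, Commute (N i) (N j)) ∧
      A = (List.ofFn (fun i : Fin r => expT k n p (p ^ (i : ℕ)) (N i))).prod := by
  have : Fact p.Prime := ⟨hp⟩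
  have h0 := hA.map_coeff_zero
  have hmul := hA.map_coeff_mul
  obtain ⟨d, hd⟩ := exists_eq_sum_X_pow_smul A
  refine ⟨d + 1, by omega, fun i => A.map (coeff · (p ^ (i : ℕ))), fun i => ?_, fun i j => ?_, ?_⟩
  · rw [pow_eq_factorial_smul_of_mul_eq_choose_smul (a := fun i => A.map (coeff · i)) h0 hmul,
      (CharP.cast_eq_zero_iff k p _).mpr (Nat.dvd_factorial hp.pos le_rfl), zero_smul]
  · rw [Commute, SemiconjBy, hmul, hmul, Nat.choose_symm_add, add_comm (p ^ (j : ℕ))]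
  · rw [prod_expT_eq_sum_X_pow_smul (a := fun i => A.map (coeff · i)) h0 hmul]
    exact hd _ ((Nat.le_succ d).trans (Nat.lt_pow_self hp.one_lt).le)
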